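/- arXiv:1812.05299 — 7 statements merged into one kernel-verified Lean document; each statement's English description precedes it below -/
import Mathlib

section
/- For all real numbers m > 0, ν > 0 and X > 0, one has (1 + X)^m ≤ (1 + ν) X^m + (1 + 1/((1 + ν)^{1/m} − 1))^m. -/
theorem add_le_max_mul {K : Type*} [Field K] [LinearOrder K] [IsStrictOrderedRing K]
    {c : K} (hc : 1 < c) (a b : K) :
    a + b ≤ max (c * b) ((1 + 1 / (c - 1)) * a) := by
  have hc' : 0 < c - 1 := sub_pos.2 hc
  -- At `b = a / (c - 1)` the sum and both entries of the maximum coincide.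
  rcases le_total (a / (c - 1)) b with hab | hba
  · have ha : a ≤ b * (c - 1) := (div_le_iff₀ hc').1 hab
    exact le_max_of_le_left (by linarith)
  · refine le_max_of_le_right ?_
    calc
      a + b ≤ a + a / (c - 1) := by gcongr
      _ = (1 + 1 / (c - 1)) * a := by ring

theorem add_rpow_le_max_mul_rpow {a b c m : ℝ} (ha : 0 ≤ a) (hb : 0 ≤ b) (hc : 1 < c)
    (hm : 0 ≤ m) :
    (a + b) ^ m ≤ max (c ^ m * b ^ m) ((1 + 1 / (c - 1)) ^ m * a ^ m) := by
  have hc₀ : 0 ≤ c := zero_le_one.trans hc.le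
  have hd : 0 ≤ 1 + 1 / (c - 1) :=
    add_nonneg zero_le_one (one_div_nonneg.2 (sub_nonneg.2 hc.le))
  rw [← Real.mul_rpow hc₀ hb, ← Real.mul_rpow hd ha,
    ← (Real.monotoneOn_rpow_Ici_of_exponent_nonneg hm).map_max (mul_nonneg hc₀ hb)
      (mul_nonneg hd ha)]
  exact Real.rpow_le_rpow (add_nonneg ha hb) (add_le_max_mul hc a b) hm

theorem stmt2 (m ν X : ℝ) (hm : 0 < m) (hν : 0 < ν) (hX : 0 < X) :
    (1 + X) ^ m ≤ (1 + ν) * X ^ m + (1 + 1 / ((1 + ν) ^ (1 / m) - 1)) ^ m := by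
  have hc : 1 < (1 + ν) ^ (1 / m) :=
    Real.one_lt_rpow (lt_add_of_pos_right 1 hν) (one_div_pos.2 hm)
  have hcm : ((1 + ν) ^ (1 / m)) ^ m = 1 + ν := by
    rw [one_div, Real.rpow_inv_rpow (by positivity) hm.ne']
  have hd : 0 ≤ 1 + 1 / ((1 + ν) ^ (1 / m) - 1) :=
    add_nonneg zero_le_one (one_div_nonneg.2 (sub_nonneg.2 hc.le))
  calc
    (1 + X) ^ m ≤ max ((1 + ν) * X ^ m) ((1 + 1 / ((1 + ν) ^ (1 / m) - 1)) ^ m) := by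
      simpa only [hcm, Real.one_rpow, mul_one] using
        add_rpow_le_max_mul_rpow zero_le_one hX.le hc hm.le
    _ ≤ (1 + ν) * X ^ m + (1 + 1 / ((1 + ν) ^ (1 / m) - 1)) ^ m :=
      max_le_add_of_nonneg (by positivity) (Real.rpow_nonneg hd m)
end

section
/- For every real number k > 1 and every ν > 0 there exists a constant C_{k,ν} > 0, depending only on k and ν, such that for all v, v′ ∈ ℝ³: |⟨v′⟩^k − ⟨v⟩^k| ≤ (1 + ν) |v − v′|^k + C_{k,ν} |v − v′| ⟨v⟩^{k−1}. -/
/-- The Japanese bracket `⟨v⟩ = (1 + |v|²)^{1/2}`. -/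
noncomputable def jap (v : EuclideanSpace ℝ (Fin 3)) : ℝ := Real.sqrt (1 + ‖v‖ ^ 2)

/-!
The bracket `⟨v⟩` is the Euclidean norm of `(1, v)`, hence `1`-Lipschitz in `v`, and only an
inequality between powers of nonnegative reals `a = ⟨v⟩`, `b = ⟨v'⟩` with `|b - a| ≤ d` remains.
If `b ≤ a`, the tangent line at `a` bounds `a ^ k - b ^ k` by a multiple of `d * a ^ (k - 1)`.
If `b ≥ a`, bound `b` by `a + d` and compare `a` with `ε * d`, where `(1 + ε) ^ k = 1 + ν`:
either `a + d ≤ (1 + ε) * d`, or `a + d ≤ (1 + ε⁻¹) * a` and the tangent line at `a + d` applies.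
-/

section RealPowers

variable {p ε a b d : ℝ}

theorem rpow_sub_rpow_le_mul_sub (hp : 1 ≤ p) (ha : 0 ≤ a) (hb : 0 ≤ b) :
    a ^ p - b ^ p ≤ p * a ^ (p - 1) * (a - b) := by
  have hconvex : ConvexOn ℝ (Set.Ici 0) fun x : ℝ ↦ x ^ p := convexOn_rpow hp
  have hderiv : HasDerivAt (fun x : ℝ ↦ x ^ p) (p * a ^ (p - 1)) a :=
    Real.hasDerivAt_rpow_const (Or.inr hp)
  rcases lt_trichotomy a b with hab | rfl | hba
  · have hslope := hconvex.le_slope_of_hasDerivAt ha hb hab hderiv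
    rw [slope_def_field, le_div_iff₀ (sub_pos.2 hab)] at hslope
    linarith
  · simp
  · have hslope := hconvex.slope_le_of_hasDerivAt hb ha hba hderiv
    rwa [slope_def_field, div_le_iff₀ (sub_pos.2 hba)] at hslope

theorem add_rpow_sub_rpow_le (hp : 1 ≤ p) (hε : 0 < ε) (ha : 0 ≤ a) (hd : 0 ≤ d) :
    (a + d) ^ p - a ^ p ≤
      (1 + ε) ^ p * d ^ p + p * (1 + ε⁻¹) ^ (p - 1) * d * a ^ (p - 1) := by
  rcases le_total a (ε * d) with had | hda
  · calc (a + d) ^ p - a ^ p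
        ≤ (a + d) ^ p := sub_le_self _ (by positivity)
      _ ≤ ((1 + ε) * d) ^ p := by gcongr; linarith
      _ = (1 + ε) ^ p * d ^ p := Real.mul_rpow (by positivity) hd
      _ ≤ _ := le_add_of_nonneg_right (by positivity)
  · have hsum : a + d ≤ (1 + ε⁻¹) * a := by
      linarith [(le_inv_mul_iff₀ hε).2 hda]
    calc (a + d) ^ p - a ^ p
        ≤ p * (a + d) ^ (p - 1) * (a + d - a) :=
          rpow_sub_rpow_le_mul_sub hp (by positivity) ha
      _ = p * (a + d) ^ (p - 1) * d := by rw [add_sub_cancel_left]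
      _ ≤ p * ((1 + ε⁻¹) * a) ^ (p - 1) * d := by gcongr
      _ = p * (1 + ε⁻¹) ^ (p - 1) * d * a ^ (p - 1) := by
          rw [Real.mul_rpow (by positivity) ha]; ring
      _ ≤ _ := le_add_of_nonneg_left (by positivity)

theorem abs_rpow_sub_rpow_le (hp : 1 ≤ p) (hε : 0 < ε) (ha : 0 ≤ a) (hb : 0 ≤ b)
    (hd : |b - a| ≤ d) :
    |b ^ p - a ^ p| ≤
      (1 + ε) ^ p * d ^ p + p * (1 + ε⁻¹) ^ (p - 1) * d * a ^ (p - 1) := by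
  have hd₀ : 0 ≤ d := (abs_nonneg _).trans hd
  obtain ⟨hlower, hupper⟩ := abs_le.1 hd
  rw [abs_sub_le_iff]
  constructor
  · calc b ^ p - a ^ p
        ≤ (a + d) ^ p - a ^ p := by gcongr; linarith
      _ ≤ _ := add_rpow_sub_rpow_le hp hε ha hd₀
  · have hone : 1 ≤ (1 + ε⁻¹) ^ (p - 1) :=
      Real.one_le_rpow (le_add_of_nonneg_right (by positivity)) (by linarith)
    calc a ^ p - b ^ p
        ≤ p * a ^ (p - 1) * (a - b) := rpow_sub_rpow_le_mul_sub hp ha hb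
      _ ≤ p * a ^ (p - 1) * d := by gcongr; linarith
      _ = p * 1 * d * a ^ (p - 1) := by ring
      _ ≤ p * (1 + ε⁻¹) ^ (p - 1) * d * a ^ (p - 1) := by gcongr
      _ ≤ _ := le_add_of_nonneg_left (by positivity)

end RealPowers

section JapaneseBracket

variable {E : Type*} [SeminormedAddCommGroup E]

/-- The Japanese bracket `⟨v⟩ = (1 + ‖v‖²)^{1/2}` on a seminormed group; on
`EuclideanSpace ℝ (Fin 3)` it is definitionally `jap`. -/
noncomputable def japaneseBracket (v : E) : ℝ := √(1 + ‖v‖ ^ 2)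

theorem japaneseBracket_nonneg (v : E) : 0 ≤ japaneseBracket v := Real.sqrt_nonneg _

theorem japaneseBracket_eq_norm_toLp (v : E) :
    japaneseBracket v = ‖WithLp.toLp 2 ((1 : ℝ), v)‖ := by
  simp [japaneseBracket, WithLp.prod_norm_eq_of_L2]

theorem abs_japaneseBracket_sub_le (v w : E) :
    |japaneseBracket v - japaneseBracket w| ≤ ‖v - w‖ := by
  calc |japaneseBracket v - japaneseBracket w|
      ≤ ‖WithLp.toLp 2 ((1 : ℝ), v) - WithLp.toLp 2 ((1 : ℝ), w)‖ := by
        simpa only [japaneseBracket_eq_norm_toLp] using abs_norm_sub_norm_le _ _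
    _ = ‖v - w‖ := by
        rw [← WithLp.toLp_sub, Prod.mk_sub_mk, sub_self, WithLp.norm_toLp_snd]

theorem stmt3_general {k ν : ℝ} (hk : 1 ≤ k) (hν : 0 < ν) :
    ∃ C : ℝ, 0 < C ∧ ∀ v v' : E,
      |japaneseBracket v' ^ k - japaneseBracket v ^ k| ≤
        (1 + ν) * ‖v - v'‖ ^ k + C * ‖v - v'‖ * japaneseBracket v ^ (k - 1) := by
  obtain ⟨ε, hε, hεν⟩ : ∃ ε : ℝ, 0 < ε ∧ (1 + ε) ^ k = 1 + ν := by
    refine ⟨(1 + ν) ^ k⁻¹ - 1, sub_pos.2 ?_, ?_⟩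
    · exact Real.one_lt_rpow (by linarith) (by positivity)
    · rw [add_sub_cancel, Real.rpow_inv_rpow (by positivity) (by positivity)]
  refine ⟨k * (1 + ε⁻¹) ^ (k - 1), by positivity, fun v v' ↦ ?_⟩
  rw [← hεν]
  refine abs_rpow_sub_rpow_le hk hε (japaneseBracket_nonneg v) (japaneseBracket_nonneg v') ?_
  rw [norm_sub_rev]
  exact abs_japaneseBracket_sub_le v' v

end JapaneseBracket

theorem stmt3 (k ν : ℝ) (hk : 1 < k) (hν : 0 < ν) :
    ∃ C : ℝ, 0 < C ∧ ∀ v v' : EuclideanSpace ℝ (Fin 3),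
      |jap v' ^ k - jap v ^ k| ≤ (1 + ν) * ‖v - v'‖ ^ k + C * ‖v - v'‖ * jap v ^ (k - 1) :=
  stmt3_general hk.le hν
end

section
/- For every α > 0 there exists a constant c_α > 0, depending only on α, such that for all t > 0 and all ξ, η ∈ ℝ³: ∫₀^t |ξ − sη|^α ds ≥ c_α (t |ξ|^α + t^{α+1} |η|^α). -/
open MeasureTheory

/-! Fold `[0, t]` onto its first half by pairing `s` with `s + t / 2`. An affine map `s ↦ ξ - s • η`
is determined by its values at two such points, and both `‖ξ‖` and `t * ‖η‖` are at most twice the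
sum of the norms of these values. Raising to the power `α` and integrating over the first half of
the interval gives the bound. -/

section Real

variable {a b p : ℝ}

theorem add_rpow_le_two_rpow_mul_rpow_add_rpow (ha : 0 ≤ a) (hb : 0 ≤ b) (hp : 0 ≤ p) :
    (a + b) ^ p ≤ 2 ^ p * (a ^ p + b ^ p) := by
  lift a to NNReal using ha
  lift b to NNReal using hb
  have key := ENNReal.add_rpow_le_two_rpow_mul_rpow_add_rpow (a : ENNReal) b hp
  rw [← ENNReal.coe_ofNat] at key
  simp only [← ENNReal.coe_add, ← ENNReal.coe_rpow_of_nonneg _ hp, ← ENNReal.coe_mul,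
    ENNReal.coe_le_coe] at key
  exact_mod_cast key

theorem rpow_le_two_mul_rpow_mul_rpow_add_rpow {x c : ℝ} (hx : 0 ≤ x) (ha : 0 ≤ a) (hb : 0 ≤ b)
    (hc : 0 ≤ c) (hp : 0 ≤ p) (h : x ≤ c * (a + b)) :
    x ^ p ≤ (2 * c) ^ p * (a ^ p + b ^ p) :=
  calc x ^ p ≤ (c * (a + b)) ^ p := Real.rpow_le_rpow hx h hp
    _ = c ^ p * (a + b) ^ p := Real.mul_rpow hc (add_nonneg ha hb)
    _ ≤ c ^ p * (2 ^ p * (a ^ p + b ^ p)) := by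
        gcongr
        exact add_rpow_le_two_rpow_mul_rpow_add_rpow ha hb hp
    _ = (2 * c) ^ p * (a ^ p + b ^ p) := by rw [Real.mul_rpow zero_le_two hc]; ring

end Real

theorem intervalIntegral_add_comp_add_right {F : Type*} [NormedAddCommGroup F] [NormedSpace ℝ F]
    {f : ℝ → F} {a h : ℝ} (hf : IntervalIntegrable f volume a (a + h))
    (hf' : IntervalIntegrable f volume (a + h) (a + h + h)) :
    ∫ s in a..(a + h), (f s + f (s + h)) = ∫ s in a..(a + h + h), f s := by
  have hf_shift : IntervalIntegrable (fun s ↦ f (s + h)) volume a (a + h) := by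
    simpa only [add_sub_cancel_right] using hf'.comp_add_right h
  rw [intervalIntegral.integral_add hf hf_shift, intervalIntegral.integral_comp_add_right,
    intervalIntegral.integral_add_adjacent_intervals hf hf']

section NormedSpace

variable {E : Type*} [SeminormedAddCommGroup E] [NormedSpace ℝ E] {s h α : ℝ}

theorem mul_norm_le_norm_sub_smul_add (hh : 0 ≤ h) (s : ℝ) (ξ η : E) :
    h * ‖η‖ ≤ ‖ξ - s • η‖ + ‖ξ - (s + h) • η‖ :=
  calc h * ‖η‖ = ‖h • η‖ := by rw [norm_smul, Real.norm_of_nonneg hh]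
    _ = ‖(ξ - s • η) - (ξ - (s + h) • η)‖ := by congr 1; module
    _ ≤ ‖ξ - s • η‖ + ‖ξ - (s + h) • η‖ := norm_sub_le _ _

theorem norm_le_two_mul_norm_sub_smul_add (hs : 0 ≤ s) (hsh : s ≤ h) (ξ η : E) :
    ‖ξ‖ ≤ 2 * (‖ξ - s • η‖ + ‖ξ - (s + h) • η‖) := by
  have slope := mul_norm_le_norm_sub_smul_add (hs.trans hsh) s ξ η
  calc ‖ξ‖ = ‖(ξ - s • η) + s • η‖ := by rw [sub_add_cancel]
    _ ≤ ‖ξ - s • η‖ + s * ‖η‖ := by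
        simpa only [norm_smul, Real.norm_of_nonneg hs] using norm_add_le (ξ - s • η) (s • η)
    _ ≤ ‖ξ - s • η‖ + h * ‖η‖ := by gcongr
    _ ≤ 2 * (‖ξ - s • η‖ + ‖ξ - (s + h) • η‖) := by
        linarith [norm_nonneg (ξ - (s + h) • η)]

theorem norm_rpow_add_rpow_le_norm_sub_smul_rpow_add (hα : 0 ≤ α) (hs : 0 ≤ s) (hsh : s ≤ h)
    (ξ η : E) :
    ‖ξ‖ ^ α + ((h + h) * ‖η‖) ^ α ≤
      2 * 4 ^ α * (‖ξ - s • η‖ ^ α + ‖ξ - (s + h) • η‖ ^ α) := by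
  have hh : 0 ≤ h := hs.trans hsh
  have intercept := rpow_le_two_mul_rpow_mul_rpow_add_rpow (norm_nonneg ξ) (norm_nonneg _)
    (norm_nonneg _) zero_le_two hα (norm_le_two_mul_norm_sub_smul_add hs hsh ξ η)
  have slope_le : (h + h) * ‖η‖ ≤ 2 * (‖ξ - s • η‖ + ‖ξ - (s + h) • η‖) := by
    linarith [mul_norm_le_norm_sub_smul_add hh s ξ η]
  have slope := rpow_le_two_mul_rpow_mul_rpow_add_rpow (by positivity) (norm_nonneg _)
    (norm_nonneg _) zero_le_two hα slope_le
  rw [show (2 * 2 : ℝ) = 4 by norm_num] at intercept slope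
  linarith

theorem mul_norm_rpow_add_rpow_le_integral (hα : 0 ≤ α) (hh : 0 ≤ h) (ξ η : E) :
    h * (‖ξ‖ ^ α + ((h + h) * ‖η‖) ^ α) ≤
      2 * 4 ^ α * ∫ s in (0 : ℝ)..(h + h), ‖ξ - s • η‖ ^ α := by
  have hcont : Continuous fun s : ℝ ↦ ‖ξ - s • η‖ ^ α :=
    Continuous.rpow_const (by fun_prop) fun _ ↦ Or.inr hα
  have hcont_shift : Continuous fun s : ℝ ↦ ‖ξ - (s + h) • η‖ ^ α :=
    hcont.comp (continuous_add_const h)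
  calc h * (‖ξ‖ ^ α + ((h + h) * ‖η‖) ^ α)
      = ∫ _ in (0 : ℝ)..h, (‖ξ‖ ^ α + ((h + h) * ‖η‖) ^ α) := by
        rw [intervalIntegral.integral_const, sub_zero, smul_eq_mul]
    _ ≤ ∫ s in (0 : ℝ)..h, 2 * 4 ^ α * (‖ξ - s • η‖ ^ α + ‖ξ - (s + h) • η‖ ^ α) :=
        intervalIntegral.integral_mono_on hh intervalIntegrable_const
          (((hcont.add hcont_shift).const_mul _).intervalIntegrable _ _)
          fun _ hs ↦ norm_rpow_add_rpow_le_norm_sub_smul_rpow_add hα hs.1 hs.2 ξ η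
    _ = 2 * 4 ^ α * ∫ s in (0 : ℝ)..(h + h), ‖ξ - s • η‖ ^ α := by
        have hfold := intervalIntegral_add_comp_add_right (a := 0) (h := h)
          (hcont.intervalIntegrable _ _) (hcont.intervalIntegrable _ _)
        rw [zero_add] at hfold
        rw [intervalIntegral.integral_const_mul, hfold]

theorem stmt5_general {t : ℝ} (hα : 0 ≤ α) (ht : 0 ≤ t) (ξ η : E) :
    t * ‖ξ‖ ^ α + t ^ (α + 1) * ‖η‖ ^ α ≤
      4 ^ (α + 1) * ∫ s in (0 : ℝ)..t, ‖ξ - s • η‖ ^ α := by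
  have hfold := mul_norm_rpow_add_rpow_le_integral hα (div_nonneg ht zero_le_two) ξ η
  rw [add_halves, Real.mul_rpow ht (norm_nonneg η)] at hfold
  rw [Real.rpow_add_one' ht (by positivity), Real.rpow_add_one four_ne_zero]
  linarith

end NormedSpace

theorem stmt5 (α : ℝ) (hα : 0 < α) :
    ∃ c : ℝ, 0 < c ∧ ∀ t : ℝ, 0 < t → ∀ ξ η : EuclideanSpace ℝ (Fin 3),
      c * (t * ‖ξ‖ ^ α + t ^ (α + 1) * ‖η‖ ^ α) ≤ ∫ s in (0 : ℝ)..t, ‖ξ - s • η‖ ^ α :=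
  ⟨(4 ^ (α + 1))⁻¹, by positivity, fun _ ht ξ η ↦
    (inv_mul_le_iff₀ (by positivity)).2 (stmt5_general hα.le ht.le ξ η)⟩
end

section
/- For every β ∈ (0,1) there exists a constant C_β > 0, depending only on β, such that for all t > 0 and all ξ, η ∈ ℝ³: ∫₀^t ⟨ξ − sη⟩^{−β} ds ≤ C_β · t / (1 + |ξ|² + t²|η|²)^{β/2}. -/
open MeasureTheory

/-!
A Hahn–Banach functional norming `η` yields `a ∈ [0, t]` with `|s - a| * ‖η‖ ≤ ‖ξ - s • η‖` for
all `s ∈ [0, t]`. Combined with `‖ξ‖ ≤ ‖ξ - s • η‖ + t * ‖η‖`, this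
bounds `√(1 + ‖ξ - s • η‖²)` from below by a multiple of
`√(1 + ‖ξ‖² + t² * ‖η‖²) * |s - a| / t`, and `|s - a| ^ (-β)` is integrable for `β < 1`. For
`β ≤ 0` the triangle inequality bounds the integrand uniformly.
-/

section PowerIntegrals

variable {r a c d : ℝ}

lemma intervalIntegrable_abs_sub_rpow (hr : -1 < r) (a c d : ℝ) :
    IntervalIntegrable (fun s : ℝ ↦ |s - a| ^ r) volume c d := by
  suffices from_center : ∀ x, IntervalIntegrable (fun s : ℝ ↦ |s - a| ^ r) volume a x from
    (from_center c).symm.trans (from_center d)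
  intro x
  rcases le_total a x with hax | hxa
  · have right : IntervalIntegrable (fun s : ℝ ↦ (s - a) ^ r) volume a x := by
      simpa using (intervalIntegral.intervalIntegrable_rpow' hr
        (a := 0) (b := x - a)).comp_sub_right a
    refine right.congr fun s hs ↦ ?_
    rw [Set.uIoc_of_le hax] at hs
    simp only [abs_of_pos (sub_pos.2 hs.1)]
  · have left : IntervalIntegrable (fun s : ℝ ↦ (a - s) ^ r) volume a x := by
      simpa using (intervalIntegral.intervalIntegrable_rpow' hr
        (a := 0) (b := a - x)).comp_sub_left a
    refine left.congr fun s hs ↦ ?_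
    rw [Set.uIoc_of_ge hxa] at hs
    simp only [abs_sub_comm s a, abs_of_nonneg (sub_nonneg.2 hs.2)]

lemma integral_abs_sub_rpow (hr : -1 < r) (ha : a ∈ Set.Icc c d) :
    ∫ s in c..d, |s - a| ^ r = ((a - c) ^ (r + 1) + (d - a) ^ (r + 1)) / (r + 1) := by
  have left : ∫ s in c..a, |s - a| ^ r = (a - c) ^ (r + 1) / (r + 1) := calc
    _ = ∫ s in c..a, (a - s) ^ r := intervalIntegral.integral_congr fun s hs ↦ by
      rw [Set.uIcc_of_le ha.1] at hs
      simp only [abs_sub_comm s a, abs_of_nonneg (sub_nonneg.2 hs.2)]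
    _ = (a - c) ^ (r + 1) / (r + 1) := by
      rw [intervalIntegral.integral_comp_sub_left (fun v : ℝ ↦ v ^ r), sub_self,
        integral_rpow (.inl hr), Real.zero_rpow (by linarith), sub_zero]
  have right : ∫ s in a..d, |s - a| ^ r = (d - a) ^ (r + 1) / (r + 1) := calc
    _ = ∫ s in a..d, (s - a) ^ r := intervalIntegral.integral_congr fun s hs ↦ by
      rw [Set.uIcc_of_le ha.2] at hs
      simp only [abs_of_nonneg (sub_nonneg.2 hs.1)]
    _ = (d - a) ^ (r + 1) / (r + 1) := by
      rw [intervalIntegral.integral_comp_sub_right (fun v : ℝ ↦ v ^ r), sub_self,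
        integral_rpow (.inl hr), Real.zero_rpow (by linarith), sub_zero]
  rw [← intervalIntegral.integral_add_adjacent_intervals
    (intervalIntegrable_abs_sub_rpow hr a c a) (intervalIntegrable_abs_sub_rpow hr a a d),
    left, right, add_div]

lemma integral_abs_sub_rpow_le (hr : -1 < r) (ha : a ∈ Set.Icc c d) :
    ∫ s in c..d, |s - a| ^ r ≤ 2 * (d - c) ^ (r + 1) / (r + 1) := by
  have hr' : 0 < r + 1 := by linarith
  rw [integral_abs_sub_rpow hr ha, two_mul]
  have left : (a - c) ^ (r + 1) ≤ (d - c) ^ (r + 1) :=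
    Real.rpow_le_rpow (sub_nonneg.2 ha.1) (by linarith [ha.2]) hr'.le
  have right : (d - a) ^ (r + 1) ≤ (d - c) ^ (r + 1) :=
    Real.rpow_le_rpow (sub_nonneg.2 ha.2) (by linarith [ha.1]) hr'.le
  gcongr

lemma integral_rpow_neg_le_of_mul_abs_sub_le {β K : ℝ} {f : ℝ → ℝ} (hβ₀ : 0 ≤ β) (hβ₁ : β < 1)
    (hK : 0 < K) (ha : a ∈ Set.Icc c d) (hf : ∀ s ∈ Set.Icc c d, K * |s - a| ≤ f s) :
    ∫ s in c..d, f s ^ (-β) ≤ K ^ (-β) * (2 * (d - c) ^ (1 - β) / (1 - β)) := by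
  have hcd : c ≤ d := ha.1.trans ha.2
  have hf₀ : ∀ s ∈ Set.Icc c d, 0 ≤ f s := fun s hs ↦ le_trans (by positivity) (hf s hs)
  have hmono : ∫ s in c..d, f s ^ (-β) ≤ ∫ s in c..d, K ^ (-β) * |s - a| ^ (-β) := by
    rw [intervalIntegral.integral_of_le hcd, intervalIntegral.integral_of_le hcd]
    refine integral_mono_of_nonneg ?_
      ((intervalIntegrable_abs_sub_rpow (by linarith) a c d).const_mul _).1 ?_
    · filter_upwards [ae_restrict_mem measurableSet_Ioc] with s hs
      exact Real.rpow_nonneg (hf₀ s (Set.Ioc_subset_Icc_self hs)) _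
    -- At `s = a` the convention `0 ^ (-β) = 0` would break the pointwise bound.
    · filter_upwards [ae_restrict_mem measurableSet_Ioc,
        ae_restrict_of_ae (Measure.ae_ne volume a)] with s hs hsa
      have hpos : 0 < |s - a| := abs_pos.2 (sub_ne_zero.2 hsa)
      rw [← Real.mul_rpow hK.le hpos.le]
      exact Real.rpow_le_rpow_of_nonpos (by positivity) (hf s (Set.Ioc_subset_Icc_self hs))
        (by linarith)
  calc ∫ s in c..d, f s ^ (-β)
    _ ≤ K ^ (-β) * ∫ s in c..d, |s - a| ^ (-β) := by
      rwa [intervalIntegral.integral_const_mul] at hmono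
    _ ≤ K ^ (-β) * (2 * (d - c) ^ (1 - β) / (1 - β)) := by
      rw [sub_eq_neg_add 1 β]
      gcongr
      exact integral_abs_sub_rpow_le (by linarith) ha

end PowerIntegrals

section NormedSpace

variable {E : Type*} [SeminormedAddCommGroup E] [NormedSpace ℝ E]

lemma exists_mem_Icc_forall_abs_sub_mul_norm_le {c d : ℝ} (hcd : c ≤ d) (x y : E) :
    ∃ a ∈ Set.Icc c d, ∀ s ∈ Set.Icc c d, |s - a| * ‖y‖ ≤ ‖x - s • y‖ := by
  obtain ⟨g, hg, hgy : g y = ‖y‖⟩ := exists_dual_vector'' ℝ y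
  refine ⟨Set.projIcc c d hcd (g x / ‖y‖), Subtype.coe_prop _, fun s hs ↦ ?_⟩
  rcases (norm_nonneg y).eq_or_lt with hy | hy
  · simp only [← hy, mul_zero, norm_nonneg]
  have hproj : |s - Set.projIcc c d hcd (g x / ‖y‖)| ≤ |s - g x / ‖y‖| := by
    simpa only [Set.projIcc_of_mem hcd hs] using
      Set.abs_projIcc_sub_projIcc hcd (c := s) (d := g x / ‖y‖)
  calc |s - Set.projIcc c d hcd (g x / ‖y‖)| * ‖y‖
    _ ≤ |s - g x / ‖y‖| * ‖y‖ := by gcongr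
    _ = |s * ‖y‖ - g x| := by
      rw [← abs_norm y, ← abs_mul, abs_norm, sub_mul, div_mul_cancel₀ _ hy.ne']
    _ = ‖g (x - s • y)‖ := by
      rw [map_sub, map_smul, hgy, smul_eq_mul, Real.norm_eq_abs, abs_sub_comm]
    _ ≤ ‖x - s • y‖ := by simpa only [one_mul] using g.le_of_opNorm_le hg (x - s • y)

lemma exists_mem_Icc_forall_sqrt_mul_abs_sub_le {t : ℝ} (ht : 0 ≤ t) (x y : E) :
    ∃ a ∈ Set.Icc 0 t, ∀ s ∈ Set.Icc 0 t,
      √(1 + ‖x‖ ^ 2 + t ^ 2 * ‖y‖ ^ 2) * |s - a| ≤ √5 * t * √(1 + ‖x - s • y‖ ^ 2) := by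
  obtain ⟨a, ha, hlow⟩ := exists_mem_Icc_forall_abs_sub_mul_norm_le ht x y
  refine ⟨a, ha, fun s hs ↦ ?_⟩
  have hδt : |s - a| ≤ t := by
    simpa only [Real.dist_eq, sub_zero] using Real.dist_le_of_mem_Icc hs ha
  have hδy : |s - a| * ‖y‖ ≤ ‖x - s • y‖ := hlow s hs
  have hx : ‖x‖ ≤ ‖x - s • y‖ + t * ‖y‖ := calc
    ‖x‖ = ‖x - s • y + s • y‖ := by rw [sub_add_cancel]
    _ ≤ ‖x - s • y‖ + s * ‖y‖ := by
      simpa only [norm_smul, Real.norm_of_nonneg hs.1] using norm_add_le (x - s • y) (s • y)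
    _ ≤ ‖x - s • y‖ + t * ‖y‖ := by gcongr; exact hs.2
  have hδx : |s - a| * ‖x‖ ≤ 2 * (t * ‖x - s • y‖) := calc
    _ ≤ |s - a| * (‖x - s • y‖ + t * ‖y‖) := by gcongr
    _ = |s - a| * ‖x - s • y‖ + t * (|s - a| * ‖y‖) := by ring
    _ ≤ t * ‖x - s • y‖ + t * ‖x - s • y‖ := by gcongr
    _ = 2 * (t * ‖x - s • y‖) := by ring
  refine le_of_sq_le_sq ?_ (by positivity)
  calc (√(1 + ‖x‖ ^ 2 + t ^ 2 * ‖y‖ ^ 2) * |s - a|) ^ 2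
    _ = |s - a| ^ 2 + (|s - a| * ‖x‖) ^ 2 + t ^ 2 * (|s - a| * ‖y‖) ^ 2 := by
      rw [mul_pow, Real.sq_sqrt (by positivity)]; ring
    _ ≤ t ^ 2 + (2 * (t * ‖x - s • y‖)) ^ 2 + t ^ 2 * ‖x - s • y‖ ^ 2 := by gcongr
    _ ≤ 5 * t ^ 2 * (1 + ‖x - s • y‖ ^ 2) := by linarith [sq_nonneg t]
    _ = (√5 * t * √(1 + ‖x - s • y‖ ^ 2)) ^ 2 := by
      rw [mul_pow, mul_pow, Real.sq_sqrt (by positivity), Real.sq_sqrt (by positivity)]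

lemma sqrt_one_add_norm_sub_smul_sq_le {s t : ℝ} (hs : s ∈ Set.Icc 0 t) (x y : E) :
    √(1 + ‖x - s • y‖ ^ 2) ≤ √2 * √(1 + ‖x‖ ^ 2 + t ^ 2 * ‖y‖ ^ 2) := by
  have htri : ‖x - s • y‖ ≤ ‖x‖ + t * ‖y‖ := calc
    _ ≤ ‖x‖ + s * ‖y‖ := by
      simpa only [norm_smul, Real.norm_of_nonneg hs.1] using norm_sub_le x (s • y)
    _ ≤ ‖x‖ + t * ‖y‖ := by gcongr; exact hs.2
  have hsq : ‖x - s • y‖ ^ 2 ≤ (‖x‖ + t * ‖y‖) ^ 2 := by gcongr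
  rw [← Real.sqrt_mul zero_le_two]
  gcongr
  nlinarith [sq_nonneg (‖x‖ - t * ‖y‖)]

lemma integral_sqrt_one_add_norm_sub_smul_sq_rpow_neg_le_of_nonneg {β t : ℝ} (hβ₀ : 0 ≤ β)
    (hβ₁ : β < 1) (ht : 0 < t) (x y : E) :
    ∫ s in 0..t, √(1 + ‖x - s • y‖ ^ 2) ^ (-β) ≤
      2 * √5 ^ β / (1 - β) * t / (1 + ‖x‖ ^ 2 + t ^ 2 * ‖y‖ ^ 2) ^ (β / 2) := by
  obtain ⟨a, ha, hlow⟩ := exists_mem_Icc_forall_sqrt_mul_abs_sub_le ht.le x y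
  rw [Real.rpow_div_two_eq_sqrt _ (by positivity)]
  set R := √(1 + ‖x‖ ^ 2 + t ^ 2 * ‖y‖ ^ 2)
  have hR : 0 < R := by positivity
  have hlow' : ∀ s ∈ Set.Icc 0 t, R / (√5 * t) * |s - a| ≤ √(1 + ‖x - s • y‖ ^ 2) := by
    intro s hs
    rw [div_mul_eq_mul_div, div_le_iff₀' (by positivity)]
    exact hlow s hs
  calc ∫ s in 0..t, √(1 + ‖x - s • y‖ ^ 2) ^ (-β)
    _ ≤ (R / (√5 * t)) ^ (-β) * (2 * (t - 0) ^ (1 - β) / (1 - β)) :=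
      integral_rpow_neg_le_of_mul_abs_sub_le hβ₀ hβ₁ (by positivity) ha hlow'
    _ = √5 ^ β * t ^ β / R ^ β * (2 * (t / t ^ β) / (1 - β)) := by
      rw [Real.rpow_neg (by positivity), Real.div_rpow hR.le (by positivity), inv_div,
        Real.mul_rpow (by positivity) ht.le, sub_zero, Real.rpow_sub ht, Real.rpow_one]
    _ = 2 * √5 ^ β / (1 - β) * t / R ^ β := by
      field_simp

lemma integral_sqrt_one_add_norm_sub_smul_sq_rpow_neg_le_of_nonpos {β t : ℝ} (hβ : β ≤ 0)
    (ht : 0 ≤ t) (x y : E) :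
    ∫ s in 0..t, √(1 + ‖x - s • y‖ ^ 2) ^ (-β) ≤
      √2 ^ (-β) * t / (1 + ‖x‖ ^ 2 + t ^ 2 * ‖y‖ ^ 2) ^ (β / 2) := by
  rw [Real.rpow_div_two_eq_sqrt _ (by positivity)]
  set R := √(1 + ‖x‖ ^ 2 + t ^ 2 * ‖y‖ ^ 2)
  have hcont : Continuous fun s : ℝ ↦ √(1 + ‖x - s • y‖ ^ 2) ^ (-β) :=
    Continuous.rpow_const (by fun_prop) fun s ↦ .inl (by positivity)
  calc ∫ s in 0..t, √(1 + ‖x - s • y‖ ^ 2) ^ (-β)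
    _ ≤ ∫ _ in 0..t, (√2 * R) ^ (-β) :=
      intervalIntegral.integral_mono_on ht (hcont.intervalIntegrable 0 t)
        intervalIntegrable_const fun s hs ↦ Real.rpow_le_rpow (Real.sqrt_nonneg _)
          (sqrt_one_add_norm_sub_smul_sq_le hs x y) (neg_nonneg.2 hβ)
    _ = √2 ^ (-β) * t / R ^ β := by
      rw [intervalIntegral.integral_const, sub_zero, smul_eq_mul,
        Real.mul_rpow (by positivity) (by positivity), Real.rpow_neg (by positivity : 0 ≤ R)]
      ring

theorem stmt7_general {β : ℝ} (hβ : β < 1) :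
    ∃ C : ℝ, 0 < C ∧ ∀ t : ℝ, 0 < t → ∀ ξ η : E,
      ∫ s in 0..t, √(1 + ‖ξ - s • η‖ ^ 2) ^ (-β) ≤
        C * t / (1 + ‖ξ‖ ^ 2 + t ^ 2 * ‖η‖ ^ 2) ^ (β / 2) := by
  rcases le_total 0 β with hβ₀ | hβ₀
  · have : 0 < 1 - β := sub_pos.2 hβ
    exact ⟨2 * √5 ^ β / (1 - β), by positivity, fun t ht ↦
      integral_sqrt_one_add_norm_sub_smul_sq_rpow_neg_le_of_nonneg hβ₀ hβ ht⟩
  · exact ⟨√2 ^ (-β), by positivity, fun t ht ↦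
      integral_sqrt_one_add_norm_sub_smul_sq_rpow_neg_le_of_nonpos hβ₀ ht.le⟩

end NormedSpace

theorem stmt7 (β : ℝ) (hβ : β ∈ Set.Ioo (0 : ℝ) 1) :
    ∃ C : ℝ, 0 < C ∧ ∀ t : ℝ, 0 < t → ∀ ξ η : EuclideanSpace ℝ (Fin 3),
      (∫ s in (0 : ℝ)..t, Real.sqrt (1 + ‖ξ - s • η‖ ^ 2) ^ (-β))
        ≤ C * t / (1 + ‖ξ‖ ^ 2 + t ^ 2 * ‖η‖ ^ 2) ^ (β / 2) :=
  stmt7_general hβ.2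
end

section
/- For every γ ∈ (0,1] and every v ∈ ℝ³: ∫_{ℝ³} |v − v★|^γ μ(v★) dv★ > 2^{−γ−7} · (28 / (3√(2π))) · ⟨v⟩^γ. -/
open MeasureTheory

/-- The normalized Maxwellian `μ(v) = (2π)^{−3/2} exp(−|v|²/2)` on ℝ³. -/
noncomputable def maxw (v : EuclideanSpace ℝ (Fin 3)) : ℝ :=
  (2 * Real.pi) ^ (-(3 : ℝ) / 2) * Real.exp (-‖v‖ ^ 2 / 2)

/-!
By the parallelogram law, one of `‖v - w‖` and `‖v + w‖` is at least `√(‖v‖² + ‖w‖²)`. The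
Maxwellian is even, so `{w | ⟨v⟩ ≤ ‖v - w‖}` carries at least half of the mass of `{w | 1 ≤ ‖w‖}`,
and Markov's inequality bounds the integral below by that half times `⟨v⟩ ^ γ`. The unit ball
carries mass at most `(2π)^(-3/2) · 4π/3 < 1/3`, which yields the lower bound `⟨v⟩ ^ γ / 3`; the
constant of the theorem is below `1/3`.
-/

lemma rpow_norm_sub_mul_exp_neg_mul_sq_norm_le {E : Type*} [SeminormedAddCommGroup E] {b γ : ℝ}
    (hb : 0 < b) (hγ : 0 ≤ γ) (v w : E) :
    ‖v - w‖ ^ γ * Real.exp (-b * ‖w‖ ^ 2) ≤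
      Real.exp (γ * ‖v‖ + γ ^ 2 / (2 * b)) * Real.exp (-(b / 2) * ‖w‖ ^ 2) := by
  have young : γ * ‖w‖ ≤ γ ^ 2 / (2 * b) + b / 2 * ‖w‖ ^ 2 := by
    have : 0 ≤ (γ - b * ‖w‖) ^ 2 / (2 * b) := by positivity
    have : (γ - b * ‖w‖) ^ 2 / (2 * b) = γ ^ 2 / (2 * b) + b / 2 * ‖w‖ ^ 2 - γ * ‖w‖ := by
      field_simp
      ring
    linarith
  have rpow_le : ‖v - w‖ ^ γ ≤ Real.exp (γ * (‖v‖ + ‖w‖)) :=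
    calc ‖v - w‖ ^ γ ≤ Real.exp (‖v‖ + ‖w‖) ^ γ := by
          gcongr
          linarith [norm_sub_le v w, Real.add_one_le_exp (‖v‖ + ‖w‖)]
      _ = Real.exp (γ * (‖v‖ + ‖w‖)) := by rw [← Real.exp_mul, mul_comm]
  calc ‖v - w‖ ^ γ * Real.exp (-b * ‖w‖ ^ 2)
      ≤ Real.exp (γ * (‖v‖ + ‖w‖)) * Real.exp (-b * ‖w‖ ^ 2) := by gcongr
    _ ≤ Real.exp (γ * ‖v‖ + γ ^ 2 / (2 * b)) * Real.exp (-(b / 2) * ‖w‖ ^ 2) := by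
        rw [← Real.exp_add, ← Real.exp_add, Real.exp_le_exp]
        linarith

section InnerProductSpace

variable {E : Type*} [NormedAddCommGroup E] [InnerProductSpace ℝ E]

lemma sqrt_sq_norm_add_sq_norm_le_max (v w : E) :
    √(‖v‖ ^ 2 + ‖w‖ ^ 2) ≤ max ‖v - w‖ ‖v + w‖ := by
  have parallelogram := parallelogram_law_with_norm ℝ v w
  have sub_sq_le : ‖v - w‖ ^ 2 ≤ max ‖v - w‖ ‖v + w‖ ^ 2 := by gcongr; exact le_max_left _ _
  have add_sq_le : ‖v + w‖ ^ 2 ≤ max ‖v - w‖ ‖v + w‖ ^ 2 := by gcongr; exact le_max_right _ _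
  exact Real.sqrt_le_iff.2 ⟨le_max_of_le_left (norm_nonneg _), by linarith⟩

variable [MeasurableSpace E]

lemma measureReal_le_norm_le_two_mul [MeasurableNeg E] (ρ : Measure E) [IsFiniteMeasure ρ]
    [ρ.IsNegInvariant] {r : ℝ} (hr : 0 ≤ r) (v : E) :
    ρ.real {w | r ≤ ‖w‖} ≤ 2 * ρ.real {w | √(r ^ 2 + ‖v‖ ^ 2) ≤ ‖v - w‖} := by
  set A := {w : E | √(r ^ 2 + ‖v‖ ^ 2) ≤ ‖v - w‖}
  have subset : {w | r ≤ ‖w‖} ⊆ A ∪ -A := fun w (hw : r ≤ ‖w‖) ↦ by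
    have le_max : √(r ^ 2 + ‖v‖ ^ 2) ≤ max ‖v - w‖ ‖v + w‖ :=
      calc √(r ^ 2 + ‖v‖ ^ 2) ≤ √(‖v‖ ^ 2 + ‖w‖ ^ 2) := by rw [add_comm]; gcongr
        _ ≤ max ‖v - w‖ ‖v + w‖ := sqrt_sq_norm_add_sq_norm_le_max v w
    simpa [A] using le_max_iff.1 le_max
  have neg_eq : ρ.real (-A) = ρ.real A := by
    simp only [measureReal_def, Measure.measure_neg]
  calc ρ.real {w | r ≤ ‖w‖} ≤ ρ.real (A ∪ -A) := measureReal_mono subset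
    _ ≤ ρ.real A + ρ.real (-A) := measureReal_union_le _ _
    _ = 2 * ρ.real A := by rw [neg_eq, two_mul]

lemma measureReal_le_norm_mul_rpow_le_two_mul_integral [MeasurableNeg E] (ρ : Measure E)
    [IsFiniteMeasure ρ] [ρ.IsNegInvariant] {r γ : ℝ} (hr : 0 ≤ r) (hγ : 0 ≤ γ) {v : E}
    (hint : Integrable (fun w ↦ ‖v - w‖ ^ γ) ρ) :
    ρ.real {w | r ≤ ‖w‖} * √(r ^ 2 + ‖v‖ ^ 2) ^ γ ≤ 2 * ∫ w, ‖v - w‖ ^ γ ∂ρ := by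
  set s := √(r ^ 2 + ‖v‖ ^ 2)
  have mono : ρ.real {w | s ≤ ‖v - w‖} ≤ ρ.real {w | s ^ γ ≤ ‖v - w‖ ^ γ} :=
    measureReal_mono fun w (hw : s ≤ ‖v - w‖) ↦ Real.rpow_le_rpow (Real.sqrt_nonneg _) hw hγ
  have markov : s ^ γ * ρ.real {w | s ^ γ ≤ ‖v - w‖ ^ γ} ≤ ∫ w, ‖v - w‖ ^ γ ∂ρ :=
    mul_meas_ge_le_integral_of_nonneg (ae_of_all _ fun w ↦ by positivity) hint _
  calc ρ.real {w | r ≤ ‖w‖} * s ^ γ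
      ≤ 2 * ρ.real {w | s ^ γ ≤ ‖v - w‖ ^ γ} * s ^ γ := by
        gcongr
        exact (measureReal_le_norm_le_two_mul ρ hr v).trans (by gcongr)
    _ = 2 * (s ^ γ * ρ.real {w | s ^ γ ≤ ‖v - w‖ ^ γ}) := by ring
    _ ≤ 2 * ∫ w, ‖v - w‖ ^ γ ∂ρ := by gcongr

variable [FiniteDimensional ℝ E] [BorelSpace E]

lemma integrable_exp_neg_mul_sq_norm {b : ℝ} (hb : 0 < b) :
    Integrable fun w : E ↦ Real.exp (-b * ‖w‖ ^ 2) := by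
  refine .of_integral_ne_zero ?_
  rw [GaussianFourier.integral_rexp_neg_mul_sq_norm hb]
  positivity

lemma integrable_rpow_norm_sub_mul_exp_neg_mul_sq_norm {b γ : ℝ} (hb : 0 < b) (hγ : 0 ≤ γ)
    (v : E) : Integrable fun w : E ↦ ‖v - w‖ ^ γ * Real.exp (-b * ‖w‖ ^ 2) := by
  have cont : Continuous fun w : E ↦ ‖v - w‖ ^ γ * Real.exp (-b * ‖w‖ ^ 2) := by
    fun_prop (disch := exact hγ)
  have dominating := (integrable_exp_neg_mul_sq_norm (E := E) (half_pos hb)).const_mul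
    (Real.exp (γ * ‖v‖ + γ ^ 2 / (2 * b)))
  refine dominating.mono' cont.aestronglyMeasurable (ae_of_all _ fun w ↦ ?_)
  rw [Real.norm_of_nonneg (by positivity)]
  exact rpow_norm_sub_mul_exp_neg_mul_sq_norm_le hb hγ v w

end InnerProductSpace

lemma isNegInvariant_withDensity {G : Type*} [MeasurableSpace G] [InvolutiveNeg G]
    [MeasurableNeg G] (ρ : Measure G) [ρ.IsNegInvariant] {f : G → ENNReal}
    (hf : ∀ x, f (-x) = f x) : (ρ.withDensity f).IsNegInvariant where
  neg_eq_self := by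
    ext s hs
    rw [Measure.neg_apply, withDensity_apply _ hs.neg, withDensity_apply _ hs]
    have := (Measure.measurePreserving_neg ρ).setLIntegral_comp_preimage_emb
      (MeasurableEquiv.neg G).measurableEmbedding f s
    simpa [hf] using this

section Maxwellian

lemma maxw_eq_mul_exp_neg_mul_sq_norm (w : EuclideanSpace ℝ (Fin 3)) :
    maxw w = (2 * Real.pi) ^ (-(3 : ℝ) / 2) * Real.exp (-(1 / 2) * ‖w‖ ^ 2) := by
  rw [maxw]
  ring_nf

lemma maxw_nonneg (w : EuclideanSpace ℝ (Fin 3)) : 0 ≤ maxw w := by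
  unfold maxw
  positivity

lemma maxw_neg (w : EuclideanSpace ℝ (Fin 3)) : maxw (-w) = maxw w := by
  simp only [maxw, norm_neg]

lemma maxw_le (w : EuclideanSpace ℝ (Fin 3)) : maxw w ≤ (2 * Real.pi) ^ (-(3 : ℝ) / 2) :=
  mul_le_of_le_one_right (by positivity)
    (Real.exp_le_one_iff.2 (by linarith [sq_nonneg ‖w‖]))

lemma continuous_maxw : Continuous maxw := by
  unfold maxw
  fun_prop

lemma integral_maxw : ∫ w, maxw w = 1 := by
  have two_pi_pos : 0 < 2 * Real.pi := by positivity
  simp only [maxw_eq_mul_exp_neg_mul_sq_norm]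
  rw [integral_const_mul, GaussianFourier.integral_rexp_neg_mul_sq_norm (by norm_num),
    show Real.pi / (1 / 2) = 2 * Real.pi by ring, ← Real.rpow_add two_pi_pos]
  norm_num

lemma integrable_rpow_norm_sub_mul_maxw {γ : ℝ} (hγ : 0 ≤ γ) (v : EuclideanSpace ℝ (Fin 3)) :
    Integrable fun w ↦ ‖v - w‖ ^ γ * maxw w := by
  simp only [maxw_eq_mul_exp_neg_mul_sq_norm, mul_left_comm]
  exact (integrable_rpow_norm_sub_mul_exp_neg_mul_sq_norm one_half_pos hγ v).const_mul _

/-- The probability measure on ℝ³ with density `maxw`. -/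
noncomputable def maxwellMeasure : Measure (EuclideanSpace ℝ (Fin 3)) :=
  volume.withDensity fun w ↦ ENNReal.ofReal (maxw w)

instance : IsProbabilityMeasure maxwellMeasure where
  measure_univ := by
    have integrable : Integrable maxw := .of_integral_ne_zero (by simp [integral_maxw])
    rw [maxwellMeasure, withDensity_apply _ .univ, Measure.restrict_univ,
      ← ofReal_integral_eq_lintegral_ofReal integrable (ae_of_all _ maxw_nonneg),
      integral_maxw, ENNReal.ofReal_one]

instance : maxwellMeasure.IsNegInvariant :=
  isNegInvariant_withDensity volume fun w ↦ by rw [maxw_neg]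

lemma integral_maxwellMeasure (f : EuclideanSpace ℝ (Fin 3) → ℝ) :
    ∫ w, f w ∂maxwellMeasure = ∫ w, f w * maxw w := by
  rw [maxwellMeasure, integral_withDensity_eq_integral_toReal_smul
    continuous_maxw.measurable.ennreal_ofReal (by simp)]
  simp [ENNReal.toReal_ofReal (maxw_nonneg _), mul_comm]

lemma integrable_maxwellMeasure_iff {f : EuclideanSpace ℝ (Fin 3) → ℝ} :
    Integrable f maxwellMeasure ↔ Integrable fun w ↦ f w * maxw w := by
  rw [maxwellMeasure, integrable_withDensity_iff
    continuous_maxw.measurable.ennreal_ofReal (by simp)]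
  simp [ENNReal.toReal_ofReal (maxw_nonneg _)]

lemma maxwellMeasure_le_smul_volume :
    maxwellMeasure ≤ ENNReal.ofReal ((2 * Real.pi) ^ (-(3 : ℝ) / 2)) • volume := by
  rw [maxwellMeasure, ← withDensity_const]
  exact withDensity_mono (ae_of_all _ fun w ↦ ENNReal.ofReal_le_ofReal (maxw_le w))

lemma two_lt_sqrt_two_mul_pi : 2 < √(2 * Real.pi) :=
  Real.lt_sqrt_of_sq_lt (by linarith [Real.pi_gt_three])

lemma maxwellMeasure_real_ball_zero_one_le_one_third :
    maxwellMeasure.real (Metric.ball 0 1) ≤ 1 / 3 := by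
  have two_pi_pos : 0 < 2 * Real.pi := by positivity
  have normalization : (2 * Real.pi) ^ (-(3 : ℝ) / 2) = (2 * Real.pi)⁻¹ * (√(2 * Real.pi))⁻¹ := by
    rw [Real.sqrt_eq_rpow, ← Real.rpow_neg_one, ← Real.rpow_neg two_pi_pos.le,
      ← Real.rpow_add two_pi_pos]
    norm_num
  have volume_ball : volume.real (Metric.ball (0 : EuclideanSpace ℝ (Fin 3)) 1) =
      Real.pi * 4 / 3 := by
    rw [measureReal_def, EuclideanSpace.volume_ball_fin_three, ENNReal.ofReal_one, one_pow,
      one_mul, ENNReal.toReal_ofReal (by positivity)]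
  calc maxwellMeasure.real (Metric.ball 0 1)
      ≤ (ENNReal.ofReal ((2 * Real.pi) ^ (-(3 : ℝ) / 2)) • volume).real (Metric.ball 0 1) :=
        ENNReal.toReal_mono (ENNReal.mul_lt_top ENNReal.ofReal_lt_top measure_ball_lt_top).ne
          (maxwellMeasure_le_smul_volume _)
    _ = (2 * Real.pi) ^ (-(3 : ℝ) / 2) * (Real.pi * 4 / 3) := by
        rw [measureReal_ennreal_smul_apply, volume_ball, ENNReal.toReal_ofReal (by positivity)]
    _ = 2 / 3 * (√(2 * Real.pi))⁻¹ := by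
        rw [normalization]
        field_simp
        norm_num
    _ ≤ 2 / 3 * 2⁻¹ := by gcongr; exact two_lt_sqrt_two_mul_pi.le
    _ = 1 / 3 := by norm_num

lemma two_thirds_le_maxwellMeasure_real_one_le_norm :
    2 / 3 ≤ maxwellMeasure.real {w | 1 ≤ ‖w‖} := by
  have compl : {w : EuclideanSpace ℝ (Fin 3) | 1 ≤ ‖w‖} = (Metric.ball 0 1)ᶜ := by
    ext w
    simp
  rw [compl, probReal_compl_eq_one_sub measurableSet_ball]
  linarith [maxwellMeasure_real_ball_zero_one_le_one_third]

lemma jap_pos (v : EuclideanSpace ℝ (Fin 3)) : 0 < jap v :=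
  Real.sqrt_pos.2 (by positivity)

lemma one_third_mul_jap_rpow_le_integral {γ : ℝ} (hγ : 0 ≤ γ) (v : EuclideanSpace ℝ (Fin 3)) :
    1 / 3 * jap v ^ γ ≤ ∫ w, ‖v - w‖ ^ γ * maxw w := by
  have lower := measureReal_le_norm_mul_rpow_le_two_mul_integral maxwellMeasure zero_le_one hγ
    (integrable_maxwellMeasure_iff.2 (integrable_rpow_norm_sub_mul_maxw hγ v))
  rw [integral_maxwellMeasure, one_pow, ← jap] at lower
  have mass : 2 / 3 * jap v ^ γ ≤ maxwellMeasure.real {w | 1 ≤ ‖w‖} * jap v ^ γ := by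
    have := jap_pos v
    gcongr
    exact two_thirds_le_maxwellMeasure_real_one_le_norm
  linarith

end Maxwellian

lemma two_rpow_mul_div_sqrt_lt_one_third {γ : ℝ} (hγ : 0 ≤ γ) :
    (2 : ℝ) ^ (-γ - 7) * (28 / (3 * √(2 * Real.pi))) < 1 / 3 := by
  have rpow_le : (2 : ℝ) ^ (-γ - 7) ≤ 2 ^ (-7 : ℝ) := by
    gcongr
    · norm_num
    · linarith
  calc (2 : ℝ) ^ (-γ - 7) * (28 / (3 * √(2 * Real.pi)))
      ≤ 2 ^ (-7 : ℝ) * (28 / (3 * 2)) := by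
        gcongr
        exact two_lt_sqrt_two_mul_pi.le
    _ < 1 / 3 := by
        rw [Real.rpow_neg zero_le_two]
        norm_num

theorem stmt8_general (γ : ℝ) (hγ : 0 ≤ γ) (v : EuclideanSpace ℝ (Fin 3)) :
    (2 : ℝ) ^ (-γ - 7) * (28 / (3 * √(2 * Real.pi))) * jap v ^ γ
      < ∫ w, ‖v - w‖ ^ γ * maxw w := by
  have := jap_pos v
  calc (2 : ℝ) ^ (-γ - 7) * (28 / (3 * √(2 * Real.pi))) * jap v ^ γ
      < 1 / 3 * jap v ^ γ := by gcongr; exact two_rpow_mul_div_sqrt_lt_one_third hγ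
    _ ≤ ∫ w, ‖v - w‖ ^ γ * maxw w := one_third_mul_jap_rpow_le_integral hγ v

theorem stmt8 (γ : ℝ) (hγ : γ ∈ Set.Ioc (0 : ℝ) 1) (v : EuclideanSpace ℝ (Fin 3)) :
    (2 : ℝ) ^ (-γ - 7) * (28 / (3 * Real.sqrt (2 * Real.pi))) * jap v ^ γ
      < ∫ vs, ‖v - vs‖ ^ γ * maxw vs :=
  stmt8_general γ hγ.1.le v
end

section
/- Let v, v★ ∈ ℝ³, let σ ∈ 𝕊² be a unit vector, and set v′ = (v + v★)/2 + (|v − v★|/2)σ. Then μ(v) · μ(v′)^{−1/2} ≤ μ(v)^{1/4} · exp((3/4)|v − v★|²) and μ(v★) · μ(v′)^{−1/2} ≤ μ(v★)^{1/4} · exp((3/4)|v − v★|²). -/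
/-!
The point `v′` lies on the sphere whose diameter is the segment from `v` to `v★`, so it is within
`|v − v★|` of both endpoints. For `|w − u| ≤ r`, Young's inequality gives
`|w|² ≤ (1 + ε)|u|² + (1 + ε⁻¹)r²`, which bounds the growth of `μ(w)^{−s}` by a negative power of
`μ(u)` times a Gaussian factor in `r`; the normalizing constants compare the right way because
`(2π)^{−3/2} ≤ 1`. The exponents `1/4` and `3/4` come from `s = ε = 1/2`.
-/

section Gaussian

variable {E : Type*} [SeminormedAddCommGroup E]

lemma norm_sq_le_of_norm_sub_le {ε r : ℝ} (hε : 0 < ε) {u w : E} (h : ‖w - u‖ ≤ r) :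
    ‖w‖ ^ 2 ≤ (1 + ε) * ‖u‖ ^ 2 + (1 + ε⁻¹) * r ^ 2 :=
  calc ‖w‖ ^ 2 ≤ (‖u‖ + r) ^ 2 := by
        gcongr
        linarith [norm_le_norm_add_norm_sub' w u]
    _ = ‖u‖ ^ 2 + 2 * ‖u‖ * r + r ^ 2 := add_sq _ _
    _ ≤ (1 + ε) * ‖u‖ ^ 2 + (1 + ε⁻¹) * r ^ 2 := by
        linarith [two_mul_le_add_mul_sq (a := ‖u‖) (b := r) hε]

/-- The Gaussian weight `c exp(−|v|²/2)`; `maxw` is the case `c = (2π)^{−3/2}` on ℝ³. Leaving `c`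
free makes the estimates independent of the dimension. -/
noncomputable def gaussianWeight (c : ℝ) (v : E) : ℝ :=
  c * Real.exp (-‖v‖ ^ 2 / 2)

lemma gaussianWeight_rpow {c : ℝ} (hc : 0 ≤ c) (v : E) (p : ℝ) :
    gaussianWeight c v ^ p = c ^ p * Real.exp (-(p * ‖v‖ ^ 2 / 2)) := by
  rw [gaussianWeight, Real.mul_rpow hc (Real.exp_pos _).le, ← Real.exp_mul]
  congr 2
  ring

theorem gaussianWeight_mul_rpow_neg_le {c : ℝ} (hc₀ : 0 < c) (hc₁ : c ≤ 1) {s ε r : ℝ}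
    (hs : 0 ≤ s) (hε : 0 < ε) {u w : E} (h : ‖w - u‖ ≤ r) :
    gaussianWeight c u * gaussianWeight c w ^ (-s) ≤
      gaussianWeight c u ^ (1 - (1 + ε) * s) * Real.exp ((1 + ε⁻¹) * s / 2 * r ^ 2) := by
  have hconst : c ^ (1 - s) ≤ c ^ (1 - (1 + ε) * s) :=
    Real.rpow_le_rpow_of_exponent_ge hc₀ hc₁ (by linarith [mul_nonneg hε.le hs])
  have hexponent : -(‖u‖ ^ 2 / 2) + s * ‖w‖ ^ 2 / 2 ≤
      -((1 - (1 + ε) * s) * ‖u‖ ^ 2 / 2) + (1 + ε⁻¹) * s / 2 * r ^ 2 := by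
    linarith [mul_le_mul_of_nonneg_left (norm_sq_le_of_norm_sub_le hε h) hs]
  calc gaussianWeight c u * gaussianWeight c w ^ (-s)
      = c ^ (1 - s) * Real.exp (-(‖u‖ ^ 2 / 2) + s * ‖w‖ ^ 2 / 2) := by
        rw [gaussianWeight_rpow hc₀.le, gaussianWeight, sub_eq_add_neg, Real.rpow_add hc₀,
          Real.rpow_one, Real.exp_add]
        ring_nf
    _ ≤ c ^ (1 - (1 + ε) * s) * Real.exp
          (-((1 - (1 + ε) * s) * ‖u‖ ^ 2 / 2) + (1 + ε⁻¹) * s / 2 * r ^ 2) := by gcongr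
    _ = gaussianWeight c u ^ (1 - (1 + ε) * s) * Real.exp ((1 + ε⁻¹) * s / 2 * r ^ 2) := by
        rw [gaussianWeight_rpow hc₀.le, Real.exp_add, mul_assoc]

end Gaussian

section Collision

variable {E : Type*} [SeminormedAddCommGroup E] [NormedSpace ℝ E]

/-- The post-collisional velocity `v′ = (v + v★)/2 + (|v − v★|/2)σ` of two particles with velocities
`v` and `v★`, in the `σ`-parametrisation. -/
noncomputable def postCollision (v vs σ : E) : E :=
  (1 / 2 : ℝ) • (v + vs) + (‖v - vs‖ / 2) • σ

lemma postCollision_comm (v vs σ : E) : postCollision v vs σ = postCollision vs v σ := by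
  rw [postCollision, postCollision, add_comm v, norm_sub_rev]

lemma norm_postCollision_sub_left_le (v vs : E) {σ : E} (hσ : ‖σ‖ ≤ 1) :
    ‖postCollision v vs σ - v‖ ≤ ‖v - vs‖ :=
  calc ‖postCollision v vs σ - v‖
      = ‖(‖v - vs‖ / 2) • σ - (1 / 2 : ℝ) • (v - vs)‖ := by
        congr 1
        rw [postCollision]
        module
    _ ≤ ‖v - vs‖ / 2 * ‖σ‖ + 1 / 2 * ‖v - vs‖ := by
        refine (norm_sub_le _ _).trans_eq ?_
        rw [norm_smul_of_nonneg (by positivity), norm_smul_of_nonneg (by norm_num)]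
    _ ≤ ‖v - vs‖ / 2 * 1 + 1 / 2 * ‖v - vs‖ := by gcongr
    _ = ‖v - vs‖ := by ring

theorem stmt11_general {c : ℝ} (hc₀ : 0 < c) (hc₁ : c ≤ 1) {s ε : ℝ} (hs : 0 ≤ s) (hε : 0 < ε)
    (v vs : E) {σ : E} (hσ : ‖σ‖ ≤ 1) :
    gaussianWeight c v * gaussianWeight c (postCollision v vs σ) ^ (-s)
        ≤ gaussianWeight c v ^ (1 - (1 + ε) * s)
          * Real.exp ((1 + ε⁻¹) * s / 2 * ‖v - vs‖ ^ 2) ∧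
      gaussianWeight c vs * gaussianWeight c (postCollision v vs σ) ^ (-s)
        ≤ gaussianWeight c vs ^ (1 - (1 + ε) * s)
          * Real.exp ((1 + ε⁻¹) * s / 2 * ‖v - vs‖ ^ 2) := by
  refine ⟨gaussianWeight_mul_rpow_neg_le hc₀ hc₁ hs hε (norm_postCollision_sub_left_le v vs hσ), ?_⟩
  rw [postCollision_comm, norm_sub_rev]
  exact gaussianWeight_mul_rpow_neg_le hc₀ hc₁ hs hε (norm_postCollision_sub_left_le vs v hσ)

end Collision

lemma maxw_eq_gaussianWeight : maxw = gaussianWeight ((2 * Real.pi) ^ (-(3 : ℝ) / 2)) :=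
  rfl

lemma two_pi_rpow_le_one {p : ℝ} (hp : p ≤ 0) : (2 * Real.pi) ^ p ≤ 1 :=
  Real.rpow_le_one_of_one_le_of_nonpos (by linarith [Real.pi_gt_three]) hp

theorem stmt11 (v vs σ v' : EuclideanSpace ℝ (Fin 3)) (hσ : ‖σ‖ = 1)
    (hv' : v' = (1 / 2 : ℝ) • (v + vs) + (‖v - vs‖ / 2) • σ) :
    maxw v * maxw v' ^ (-(1 / 2) : ℝ)
        ≤ maxw v ^ ((1 / 4) : ℝ) * Real.exp ((3 / 4) * ‖v - vs‖ ^ 2) ∧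
      maxw vs * maxw v' ^ (-(1 / 2) : ℝ)
        ≤ maxw vs ^ ((1 / 4) : ℝ) * Real.exp ((3 / 4) * ‖v - vs‖ ^ 2) := by
  rw [hv', ← postCollision, maxw_eq_gaussianWeight]
  convert stmt11_general (s := 1 / 2) (ε := 1 / 2) (by positivity)
    (two_pi_rpow_le_one (p := -(3 : ℝ) / 2) (by norm_num)) (by norm_num) (by norm_num) v vs hσ.le
    using 4 <;> norm_num
end

section
/- Let γ ∈ (0,1], ν > 0 and let k be a real number with k ≥ 2 + (3+γ)/2 and 2(1+ν) < 2^{(2k−7−γ)/4}. Then for every θ ∈ (0, π/2]: 1 − cos^{2k−(3+γ)}(θ/2) − 2(1+ν) sin^{k−(3+γ)/2}(θ/2) ≥ sin²(θ/2) · (1 − 2(1+ν) · 2^{−(2k−7−γ)/4}) > 0. -/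
/-! With `p = k - (3 + γ) / 2 ≥ 2`, `s = sin (θ / 2)` and `c = cos (θ / 2)`, the quantity to bound
is `1 - c ^ (2 * p) - 2 * (1 + ν) * s ^ p`. Since `c ≤ 1`, the cosine costs at most
`c ^ 2 = 1 - s ^ 2`; since `s ^ 2 ≤ 1 / 2`, all but two of the powers of `s` can be traded for the
constant `2 ^ (-((p - 2) / 2))`. What remains is `s ^ 2` times a constant, which is positive by the
upper bound on `2 * (1 + ν)`. -/

lemma rpow_le_sq_mul_rpow {s b p : ℝ} (hs : 0 ≤ s) (hsb : s ^ 2 ≤ b) (hp : 2 ≤ p) :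
    s ^ p ≤ s ^ 2 * b ^ ((p - 2) / 2) :=
  calc
    s ^ p = s ^ (2 + (p - 2)) := by rw [add_sub_cancel]
    _ = s ^ 2 * s ^ (2 * ((p - 2) / 2)) := by
      rw [Real.rpow_add_of_nonneg hs zero_le_two (sub_nonneg.2 hp), Real.rpow_two,
        mul_div_cancel₀ _ two_ne_zero]
    _ = s ^ 2 * (s ^ 2) ^ ((p - 2) / 2) := by rw [Real.rpow_mul hs, Real.rpow_two]
    _ ≤ s ^ 2 * b ^ ((p - 2) / 2) := by
      have : 0 ≤ (p - 2) / 2 := by linarith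
      gcongr

lemma rpow_le_sq {c q : ℝ} (hc₀ : 0 ≤ c) (hc₁ : c ≤ 1) (hq : 2 ≤ q) : c ^ q ≤ c ^ 2 := by
  simpa only [Real.rpow_two] using
    Real.rpow_le_rpow_of_exponent_ge' hc₀ hc₁ zero_le_two hq

lemma sq_mul_one_sub_le_one_sub_rpow_sub_rpow {s c a b p q : ℝ} (hs : 0 ≤ s) (hc : 0 ≤ c)
    (hsc : s ^ 2 + c ^ 2 = 1) (hsb : s ^ 2 ≤ b) (ha : 0 ≤ a) (hp : 2 ≤ p) (hq : 2 ≤ q) :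
    s ^ 2 * (1 - a * b ^ ((p - 2) / 2)) ≤ 1 - c ^ q - a * s ^ p := by
  have hc₁ : c ≤ 1 := (sq_le_one_iff₀ hc).1 (by linarith [sq_nonneg s])
  calc
    s ^ 2 * (1 - a * b ^ ((p - 2) / 2)) = 1 - c ^ 2 - a * (s ^ 2 * b ^ ((p - 2) / 2)) := by
      linear_combination hsc
    _ ≤ 1 - c ^ q - a * s ^ p := by
      gcongr
      · exact rpow_le_sq hc hc₁ hq
      · exact rpow_le_sq_mul_rpow hs hsb hp

lemma sin_half_sq_le_half {θ : ℝ} (hθ : 0 ≤ Real.cos θ) : Real.sin (θ / 2) ^ 2 ≤ 1 / 2 := by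
  rw [Real.sin_sq_eq_half_sub, mul_div_cancel₀ _ two_ne_zero]
  linarith

lemma mul_rpow_neg_lt_one {a b x : ℝ} (hb : 0 < b) (h : a < b ^ x) : a * b ^ (-x) < 1 := by
  rwa [Real.rpow_neg hb.le, ← div_eq_mul_inv, div_lt_one (Real.rpow_pos_of_pos hb x)]

theorem stmt12_general {a p θ : ℝ} (ha : 0 ≤ a) (hp : 2 ≤ p)
    (hap : a < (2 : ℝ) ^ ((p - 2) / 2)) (hθ : θ ∈ Set.Ioc 0 (Real.pi / 2)) :
    Real.sin (θ / 2) ^ 2 * (1 - a * (2 : ℝ) ^ (-((p - 2) / 2)))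
        ≤ 1 - Real.cos (θ / 2) ^ (2 * p) - a * Real.sin (θ / 2) ^ p ∧
      0 < Real.sin (θ / 2) ^ 2 * (1 - a * (2 : ℝ) ^ (-((p - 2) / 2))) := by
  obtain ⟨hθ₀, hθ₁⟩ := hθ
  have hsin : 0 < Real.sin (θ / 2) :=
    Real.sin_pos_of_pos_of_lt_pi (by linarith) (by linarith)
  have hcos : 0 ≤ Real.cos (θ / 2) :=
    Real.cos_nonneg_of_mem_Icc ⟨by linarith, by linarith⟩
  have hsin_sq : Real.sin (θ / 2) ^ 2 ≤ 2⁻¹ := by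
    simpa only [one_div] using
      sin_half_sq_le_half (Real.cos_nonneg_of_mem_Icc ⟨by linarith, hθ₁⟩)
  constructor
  · rw [Real.rpow_neg_eq_inv_rpow]
    exact sq_mul_one_sub_le_one_sub_rpow_sub_rpow hsin.le hcos (Real.sin_sq_add_cos_sq _)
      hsin_sq ha hp (by linarith)
  · exact mul_pos (pow_pos hsin 2) (sub_pos.2 (mul_rpow_neg_lt_one two_pos hap))

theorem stmt12 (γ ν k : ℝ) (hγ : γ ∈ Set.Ioc (0 : ℝ) 1) (hν : 0 < ν)
    (hk : 2 + (3 + γ) / 2 ≤ k) (hk2 : 2 * (1 + ν) < (2 : ℝ) ^ ((2 * k - 7 - γ) / 4))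
    (θ : ℝ) (hθ : θ ∈ Set.Ioc (0 : ℝ) (Real.pi / 2)) :
    Real.sin (θ / 2) ^ 2 * (1 - 2 * (1 + ν) * (2 : ℝ) ^ (-((2 * k - 7 - γ) / 4)))
        ≤ 1 - Real.cos (θ / 2) ^ (2 * k - (3 + γ))
            - 2 * (1 + ν) * Real.sin (θ / 2) ^ (k - (3 + γ) / 2) ∧
      0 < Real.sin (θ / 2) ^ 2 * (1 - 2 * (1 + ν) * (2 : ℝ) ^ (-((2 * k - 7 - γ) / 4))) := by
  simp only [show (2 * k - 7 - γ) / 4 = (k - (3 + γ) / 2 - 2) / 2 by ring,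
    show 2 * k - (3 + γ) = 2 * (k - (3 + γ) / 2) by ring] at hk2 ⊢
  exact stmt12_general (by linarith) (by linarith) hk2 hθ
end
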